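/- arXiv:0811.3072 — 2 statements merged into one kernel-verified Lean document; each statement's English description precedes it below -/
import Mathlib

section
/- Let W̃ be any *-homomorphism from S_η(O_N) into the bounded operators on H̃ such that W̃((P_{N^n}S_rP_{N^n})_{n≥0}) = Σ_{N−1−r} for every r ∈ Ω and the kernel of W̃ is exactly G_η. Then a sequence (A_n) ∈ S_η(O_N) is stable if and only if the operator W̃((A_n)) is invertible. -/
set_option synthInstance.maxHeartbeats 1000000
set_option maxHeartbeats 1000000

/-- The restricted finite sections algebra `S_η(O_N)`: the smallest closed *-subalgebra of
`F_η` (bounded sequences, with `n`-th entry an operator supported on the range of `P (N^n)`,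
i.e. an `N^n × N^n` matrix) containing all sequences `(P_{N^n} A P_{N^n})_{n ≥ 0}` with `A`
in the concrete Cuntz algebra `O_N`. -/
noncomputable def Seta {H : Type*} [NormedAddCommGroup H] [InnerProductSpace ℂ H]
    [CompleteSpace H] {N : ℕ} (S : Fin N → H →L[ℂ] H) (P : ℕ → H →L[ℂ] H) :
    NonUnitalStarSubalgebra ℂ (BoundedContinuousFunction ℕ (H →L[ℂ] H)) :=
  (NonUnitalStarAlgebra.adjoin ℂ
    {g : BoundedContinuousFunction ℕ (H →L[ℂ] H) |
      ∃ A ∈ (NonUnitalStarAlgebra.adjoin ℂ (Set.range S)).topologicalClosure,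
        ∀ n : ℕ, g n = P (N ^ n) * A * P (N ^ n)}).topologicalClosure

/-! With `p = (P_{N^n})`, the unit of the sequence algebra `S_η(O_N)`, invertibility in a corner can
be read off from order inequalities: `x` has an inverse of norm at most `C` in `p A p` exactly when
`p ≤ C² x*x` and `p ≤ C² xx*`. Such an inequality `0 ≤ a` says that the negative part `a⁻`
vanishes, and `a⁻` is transported by every *-homomorphism. Hence `W a ≥ 0` if and only if
`W (a⁻) = 0`, if and only if `‖(aₙ)⁻‖ → 0`, and both inequalities pass back and forth between the
entries of a sequence and its image under `W`, at the cost of a larger constant `C`.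
Finally `W p = 1`, because `p` acts as a unit on the sequences `(P_{N^n} S_r P_{N^n})`, and the
ranges of their images `Σ_{N-1-r}` contain the orthonormal basis of `H̃`. -/

open Filter Topology
open scoped BoundedContinuousFunction

/-- `x` is invertible in the corner algebra `p A p`, whose unit is the projection `p`, with an
inverse of norm at most `C`. -/
def HasCornerInverse {A : Type*} [Mul A] [Norm A] (p x : A) (C : ℝ) : Prop :=
  ∃ b : A, b = p * b * p ∧ x * b = p ∧ b * x = p ∧ ‖b‖ ≤ C

lemma exists_hasCornerInverse_one_iff {A : Type*} [Monoid A] [Norm A] {x : A} :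
    (∃ C, HasCornerInverse 1 x C) ↔ IsUnit x := by
  constructor
  · rintro ⟨C, b, -, hxb, hbx, -⟩
    exact isUnit_iff_exists.2 ⟨b, hxb, hbx⟩
  · intro hx
    obtain ⟨b, hxb, hbx⟩ := isUnit_iff_exists.1 hx
    exact ⟨‖b‖, b, by rw [one_mul, mul_one], hxb, hbx, le_rfl⟩

namespace HasCornerInverse

protected lemma star {A : Type*} [NonUnitalNormedRing A] [StarRing A] [NormedStarGroup A]
    {p x : A} {C : ℝ} (hp : IsSelfAdjoint p) (h : HasCornerInverse p x C) :
    HasCornerInverse p (star x) C := by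
  obtain ⟨b, hb, hxb, hbx, hbC⟩ := h
  refine ⟨star b, ?_, ?_, ?_, by rwa [norm_star]⟩
  · conv_lhs => rw [hb]
    rw [star_mul, star_mul, hp.star_eq, mul_assoc]
  · rw [← star_mul, hbx, hp.star_eq]
  · rw [← star_mul, hxb, hp.star_eq]

lemma le_smul_star_mul_self {A : Type*} [NonUnitalCStarAlgebra A] [PartialOrder A]
    [StarOrderedRing A] {p x : A} {C : ℝ} (hp : IsStarProjection p)
    (h : HasCornerInverse p x C) : p ≤ C ^ 2 • (star x * x) := by
  obtain ⟨b, -, -, hbx, hbC⟩ := h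
  have hnorm : ‖star b * b‖ ≤ C ^ 2 := by
    rw [CStarRing.norm_star_mul_self, ← sq]
    gcongr
  calc p = star (b * x) * (b * x) := by
        rw [hbx, hp.isSelfAdjoint.star_eq, hp.isIdempotentElem.eq]
    _ = star x * (star b * b) * x := by simp only [star_mul, mul_assoc]
    _ ≤ ‖star b * b‖ • (star x * x) := CStarAlgebra.star_left_conjugate_le_norm_smul
    _ ≤ C ^ 2 • (star x * x) := smul_le_smul_of_nonneg_right hnorm (star_mul_self_nonneg x)

end HasCornerInverse

lemma isUnit_of_isUnit_star_mul_self {A : Type*} [Monoid A] [StarMul A] {y : A}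
    (h₁ : IsUnit (star y * y)) (h₂ : IsUnit (y * star y)) : IsUnit y := by
  obtain ⟨u, hu⟩ := h₁
  obtain ⟨v, hv⟩ := h₂
  refine isUnit_iff_exists_and_exists.2 ⟨⟨star y * ↑v⁻¹, ?_⟩, ⟨↑u⁻¹ * star y, ?_⟩⟩
  · rw [← mul_assoc, ← hv, Units.mul_inv]
  · rw [mul_assoc, ← hu, Units.inv_mul]

section Corner

variable {A : Type*} [CStarAlgebra A] [PartialOrder A] [StarOrderedRing A] {p x : A} {C : ℝ}

lemma isUnit_star_mul_self_add_one_sub (hp : IsStarProjection p) (hpx : p * x = x)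
    (h : p ≤ C ^ 2 • (star x * x)) : IsUnit (star (x + (1 - p)) * (x + (1 - p))) := by
  set K := max 1 (C ^ 2)
  have hK : 1 ≤ K := le_max_left _ _
  have hq : 0 ≤ 1 - p := hp.one_sub_nonneg
  have hxq : star x * (1 - p) = 0 := by
    rw [mul_sub, mul_one, ← star_inj, star_sub, star_mul, star_star, hp.isSelfAdjoint.star_eq, hpx,
      sub_self, star_zero]
  have hqx : (1 - p) * x = 0 := by rw [sub_mul, one_mul, hpx, sub_self]
  have hexpand : star (x + (1 - p)) * (x + (1 - p)) = star x * x + (1 - p) := by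
    rw [star_add, hp.one_sub.isSelfAdjoint.star_eq, add_mul, mul_add, mul_add, hxq, hqx,
      hp.one_sub.isIdempotentElem.eq, add_zero, zero_add]
  have hle : 1 ≤ K • (star (x + (1 - p)) * (x + (1 - p))) :=
    calc (1 : A) = p + (1 : ℝ) • (1 - p) := by rw [one_smul, add_sub_cancel]
      _ ≤ K • (star x * x) + K • (1 - p) := by
        refine add_le_add (h.trans ?_) (smul_le_smul_of_nonneg_right hK hq)
        exact smul_le_smul_of_nonneg_right (le_max_right _ _) (star_mul_self_nonneg x)
      _ = K • (star (x + (1 - p)) * (x + (1 - p))) := by rw [hexpand, smul_add]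
  have hunit := CStarAlgebra.isUnit_of_le 1 hle
  rwa [← Units.smul_mk0 (zero_lt_one.trans_le hK).ne', isUnit_smul_iff] at hunit

lemma norm_le_of_le_smul_star_mul_self {b : A} (hp : IsStarProjection p) (hpb : p * b = b)
    (hxb : x * b = p) (h : p ≤ C ^ 2 • (star x * x)) : ‖b‖ ≤ |C| := by
  have hle : star b * b ≤ C ^ 2 • p :=
    calc star b * b = star b * p * b := by rw [mul_assoc, hpb]
      _ ≤ star b * (C ^ 2 • (star x * x)) * b := star_left_conjugate_le_conjugate h b
      _ = C ^ 2 • (star (x * b) * (x * b)) := by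
        simp only [star_mul, mul_smul_comm, smul_mul_assoc, mul_assoc]
      _ = C ^ 2 • p := by rw [hxb, hp.isSelfAdjoint.star_eq, hp.isIdempotentElem.eq]
  have hp_norm : ‖C ^ 2 • p‖ ≤ C ^ 2 := by
    rw [norm_smul, norm_pow, Real.norm_eq_abs, sq_abs]
    exact mul_le_of_le_one_right (sq_nonneg C) hp.norm_le
  refine (abs_norm b).symm.le.trans (sq_le_sq.1 ?_)
  calc ‖b‖ ^ 2 = ‖star b * b‖ := by rw [CStarRing.norm_star_mul_self, sq]
    _ ≤ ‖C ^ 2 • p‖ := CStarAlgebra.norm_le_norm_of_nonneg_of_le (star_mul_self_nonneg b) hle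
    _ ≤ C ^ 2 := hp_norm

lemma hasCornerInverse_of_le (hp : IsStarProjection p) (hpx : p * x = x) (hxp : x * p = x)
    (h₁ : p ≤ C ^ 2 • (star x * x)) (h₂ : p ≤ C ^ 2 • (x * star x)) :
    HasCornerInverse p x |C| := by
  have hsx : p * star x = star x := by rw [← hp.isSelfAdjoint.star_eq, ← star_mul, hxp]
  obtain ⟨u, hu⟩ : IsUnit (x + (1 - p)) := by
    refine isUnit_of_isUnit_star_mul_self (isUnit_star_mul_self_add_one_sub hp hpx h₁) ?_
    have hstar : star (star x + (1 - p)) = x + (1 - p) := by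
      rw [star_add, star_star, hp.one_sub.isSelfAdjoint.star_eq]
    have h := isUnit_star_mul_self_add_one_sub (x := star x) hp hsx (by rwa [star_star])
    rwa [hstar, ← star_star (star x + (1 - p)), hstar] at h
  have hpp : p * p = p := hp.isIdempotentElem.eq
  have hpu : p * u = x := by rw [hu, mul_add, hpx, mul_sub, mul_one, hpp, sub_self, add_zero]
  have hup : u * p = x := by rw [hu, add_mul, hxp, sub_mul, one_mul, hpp, sub_self, add_zero]
  have hcomm : p * ↑u⁻¹ = ↑u⁻¹ * p := (Commute.units_inv_right (hpu.trans hup.symm)).eq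
  have hpb : p * (p * ↑u⁻¹) = p * ↑u⁻¹ := by rw [← mul_assoc, hpp]
  have hxb : x * (p * ↑u⁻¹) = p := by rw [← mul_assoc, hxp, ← hpu, mul_assoc, u.mul_inv, mul_one]
  refine ⟨p * ↑u⁻¹, ?_, hxb, ?_, norm_le_of_le_smul_star_mul_self hp hpb hxb h₁⟩
  · rw [hpb, hcomm, mul_assoc, hpp]
  · rw [hcomm, mul_assoc, hpx, ← hup, u.inv_mul_cancel_left]

lemma neg_norm_negPart_smul_le {a : A} (hp : IsStarProjection p) (ha : IsSelfAdjoint a)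
    (hpa : p * a * p = a) : -(‖a⁻‖ • p) ≤ a := by
  have h : star p * a⁻ * p ≤ ‖a⁻‖ • (star p * p) :=
    CStarAlgebra.star_left_conjugate_le_norm_smul (CFC.negPart_nonneg a).isSelfAdjoint
  have h' := star_left_conjugate_le_conjugate (CFC.neg_negPart_le ha) p
  rw [hp.isSelfAdjoint.star_eq] at h h'
  rw [hp.isIdempotentElem.eq] at h
  rw [hpa, mul_neg, neg_mul] at h'
  exact (neg_le_neg h).trans h'

end Corner

section StarAlgHom

variable {A B : Type*} [NonUnitalCStarAlgebra A] [NonUnitalCStarAlgebra B] (φ : A →⋆ₙₐ[ℂ] B)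

open scoped CStarAlgebra in
lemma map_cfc_negPart {a : A} (ha : IsSelfAdjoint a) : φ a⁻ = (φ a)⁻ :=
  φ.map_cfcₙ (fun t : ℝ ↦ t⁻) a (hφ := map_continuous φ) (ha := ha) (hφa := ha.map φ)

lemma map_real_smul_star_mul_self (r : ℝ) (x : A) :
    φ (r • (star x * x)) = r • (star (φ x) * φ x) := by
  rw [← Complex.coe_smul, map_smul, Complex.coe_smul, map_mul, map_star]

end StarAlgHom

section Family

variable {ι : Type*} {l : Filter ι} {A B : Type*} {D : ι → Type*} [NonUnitalCStarAlgebra A]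
  [CStarAlgebra B] [∀ i, CStarAlgebra (D i)] {π : ∀ i, A →⋆ₙₐ[ℂ] D i} {φ : A →⋆ₙₐ[ℂ] B}

lemma map_nonneg_iff_tendsto_norm_negPart [PartialOrder B] [StarOrderedRing B]
    (hker : ∀ a, φ a = 0 ↔ Tendsto (fun i ↦ ‖π i a‖) l (𝓝 0)) {a : A} (ha : IsSelfAdjoint a) :
    0 ≤ φ a ↔ Tendsto (fun i ↦ ‖(π i a)⁻‖) l (𝓝 0) := by
  rw [← CFC.negPart_eq_zero_iff (φ a) (ha.map φ), ← map_cfc_negPart φ ha, hker]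
  simp only [map_cfc_negPart _ ha]

section Order

variable [PartialOrder B] [StarOrderedRing B] [∀ i, PartialOrder (D i)]
  [∀ i, StarOrderedRing (D i)]

lemma map_le_map_of_eventually_le
    (hker : ∀ a, φ a = 0 ↔ Tendsto (fun i ↦ ‖π i a‖) l (𝓝 0)) {a b : A} (ha : IsSelfAdjoint a)
    (hb : IsSelfAdjoint b) (h : ∀ᶠ i in l, π i a ≤ π i b) : φ a ≤ φ b := by
  rw [← sub_nonneg, ← map_sub, map_nonneg_iff_tendsto_norm_negPart hker (hb.sub ha)]
  refine tendsto_const_nhds.congr' ?_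
  filter_upwards [h] with i hi
  rw [← sub_nonneg, ← map_sub] at hi
  rw [(CFC.negPart_eq_zero_iff _ ((hb.sub ha).map (π i))).2 hi, norm_zero]

lemma eventually_le_add_smul_of_map_le
    (hker : ∀ a, φ a = 0 ↔ Tendsto (fun i ↦ ‖π i a‖) l (𝓝 0)) {p a b : A}
    (hp : IsStarProjection p) (ha : IsSelfAdjoint a) (hb : IsSelfAdjoint b)
    (hpa : p * a * p = a) (hpb : p * b * p = b) (h : φ a ≤ φ b) {ε : ℝ} (hε : 0 < ε) :
    ∀ᶠ i in l, π i a ≤ π i b + ε • π i p := by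
  have hsa := hb.sub ha
  rw [← sub_nonneg, ← map_sub, map_nonneg_iff_tendsto_norm_negPart hker hsa] at h
  filter_upwards [h.eventually_le_const hε] with i hi
  have hpi : IsStarProjection (π i p) := hp.map (π i)
  have hcorner : π i p * π i (b - a) * π i p = π i (b - a) := by
    rw [← map_mul, ← map_mul, mul_sub, sub_mul, hpa, hpb]
  have hle : -(ε • π i p) ≤ π i (b - a) :=
    (neg_le_neg (smul_le_smul_of_nonneg_right hi hpi.nonneg)).trans
      (neg_norm_negPart_smul_le hpi (hsa.map (π i)) hcorner)
  rwa [map_sub, neg_le_sub_iff_le_add] at hle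

lemma map_le_smul_star_mul_self_of_eventually
    (hker : ∀ a, φ a = 0 ↔ Tendsto (fun i ↦ ‖π i a‖) l (𝓝 0)) {p x : A}
    (hp : IsStarProjection p) {C : ℝ}
    (h : ∀ᶠ i in l, π i p ≤ C ^ 2 • (star (π i x) * π i x)) :
    φ p ≤ C ^ 2 • (star (φ x) * φ x) := by
  simp only [← map_real_smul_star_mul_self] at h ⊢
  exact map_le_map_of_eventually_le hker hp.isSelfAdjoint
    (IsSelfAdjoint.smul (.all _) (.star_mul_self x)) h

lemma eventually_le_smul_star_mul_self_of_map
    (hker : ∀ a, φ a = 0 ↔ Tendsto (fun i ↦ ‖π i a‖) l (𝓝 0)) {p x : A}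
    (hp : IsStarProjection p) (hxp : x * p = x) {C : ℝ}
    (h : φ p ≤ C ^ 2 • (star (φ x) * φ x)) :
    ∀ᶠ i in l, π i p ≤ (2 * C) ^ 2 • (star (π i x) * π i x) := by
  rw [← map_real_smul_star_mul_self] at h
  have hpp : p * p = p := hp.isIdempotentElem.eq
  have hps : p * star x = star x := by rw [← hp.isSelfAdjoint.star_eq, ← star_mul, hxp]
  have hcorner : p * (C ^ 2 • (star x * x)) * p = C ^ 2 • (star x * x) := by
    rw [mul_smul_comm, smul_mul_assoc, ← mul_assoc, hps, mul_assoc, hxp]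
  filter_upwards [eventually_le_add_smul_of_map_le hker hp hp.isSelfAdjoint
    (IsSelfAdjoint.smul (.all _) (.star_mul_self x)) (by rw [hpp, hpp]) hcorner h
    (show (0 : ℝ) < 3 / 4 by norm_num)] with i hi
  rw [map_real_smul_star_mul_self, ← sub_le_iff_le_add] at hi
  calc π i p = (4 : ℝ) • (π i p - (3 / 4 : ℝ) • π i p) := by module
    _ ≤ (4 : ℝ) • (C ^ 2 • (star (π i x) * π i x)) :=
      smul_le_smul_of_nonneg_left hi (by norm_num)
    _ = (2 * C) ^ 2 • (star (π i x) * π i x) := by module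

end Order

theorem exists_eventually_hasCornerInverse_iff
    (hker : ∀ a, φ a = 0 ↔ Tendsto (fun i ↦ ‖π i a‖) l (𝓝 0)) {p x : A}
    (hp : IsStarProjection p) (hpx : p * x = x) (hxp : x * p = x) :
    (∃ C, ∀ᶠ i in l, HasCornerInverse (π i p) (π i x) C) ↔
      ∃ C, HasCornerInverse (φ p) (φ x) C := by
  let _ := CStarAlgebra.spectralOrder B
  have := CStarAlgebra.spectralOrderedRing B
  let _ := fun i ↦ CStarAlgebra.spectralOrder (D i)
  have := fun i ↦ CStarAlgebra.spectralOrderedRing (D i)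
  have hxp' : star x * p = star x := by rw [← hp.isSelfAdjoint.star_eq, ← star_mul, hpx]
  constructor
  · rintro ⟨C, h⟩
    refine ⟨|C|, hasCornerInverse_of_le (hp.map φ) (by rw [← map_mul, hpx])
      (by rw [← map_mul, hxp]) ?_ ?_⟩
    · refine map_le_smul_star_mul_self_of_eventually hker hp ?_
      filter_upwards [h] with i hi
      exact hi.le_smul_star_mul_self (hp.map (π i))
    · have hstar : ∀ᶠ i in l, π i p ≤ C ^ 2 • (star (π i (star x)) * π i (star x)) := by
        filter_upwards [h] with i hi
        rw [map_star]
        exact (hi.star (hp.map (π i)).isSelfAdjoint).le_smul_star_mul_self (hp.map (π i))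
      simpa only [map_star, star_star] using map_le_smul_star_mul_self_of_eventually hker hp hstar
  · rintro ⟨C, h⟩
    have hle := h.le_smul_star_mul_self (hp.map φ)
    have hle' := (h.star (hp.map φ).isSelfAdjoint).le_smul_star_mul_self (hp.map φ)
    rw [← map_star] at hle'
    refine ⟨|2 * C|, ?_⟩
    filter_upwards [eventually_le_smul_star_mul_self_of_map hker hp hxp hle,
      eventually_le_smul_star_mul_self_of_map hker hp hxp' hle'] with i hi hi'
    rw [map_star, star_star] at hi'
    exact hasCornerInverse_of_le (hp.map (π i)) (by rw [← map_mul, hpx]) (by rw [← map_mul, hxp])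
      hi hi'

end Family

section HilbertBasis

variable {ι E F : Type*} [NormedAddCommGroup E] [InnerProductSpace ℂ E] [NormedAddCommGroup F]
  [NormedSpace ℂ F] (b : HilbertBasis ι ℂ E)

lemma continuousLinearMap_ext_hilbertBasis {T U : E →L[ℂ] F} (h : ∀ i, T (b i) = U (b i)) :
    T = U :=
  ContinuousLinearMap.ext_on (Submodule.dense_iff_topologicalClosure_eq_top.2 b.dense_span)
    (Set.forall_mem_range.2 h)

lemma eq_of_forall_inner_hilbertBasis_eq {x y : E}
    (h : ∀ i, inner ℂ (b i) x = inner ℂ (b i) y) : x = y := by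
  refine b.repr.injective (lp.ext (funext fun i ↦ ?_))
  simpa only [b.repr_apply_apply] using h i

lemma eq_one_of_mul_eq_self {κ : Type*} {T : E →L[ℂ] E} {V : κ → E →L[ℂ] E}
    (hT : ∀ k, T * V k = V k) (hV : ∀ i, ∃ k v, V k v = b i) : T = 1 := by
  refine continuousLinearMap_ext_hilbertBasis b fun i ↦ ?_
  obtain ⟨k, v, hv⟩ := hV i
  rw [← hv]
  exact DFunLike.congr_fun (hT k) v

variable [CompleteSpace E]

lemma isStarProjection_of_apply_hilbertBasis {s : ι → Prop} [DecidablePred s] {T : E →L[ℂ] E}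
    (hT : ∀ i, T (b i) = if s i then b i else 0) : IsStarProjection T := by
  classical
  constructor
  · refine continuousLinearMap_ext_hilbertBasis b fun i ↦ ?_
    by_cases hi : s i <;> simp [hT, hi]
  · refine continuousLinearMap_ext_hilbertBasis b fun i ↦
      eq_of_forall_inner_hilbertBasis_eq b fun j ↦ ?_
    rw [ContinuousLinearMap.star_eq_adjoint, ContinuousLinearMap.adjoint_inner_right, hT, hT]
    have horth := orthonormal_iff_ite.1 b.orthonormal
    by_cases hij : j = i
    · subst hij
      by_cases hi : s j <;> simp [hi]
    · by_cases hi : s i <;> by_cases hj : s j <;> simp [hi, hj, horth, hij]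

section Permutation

variable {κ : Type*} {σ : ι × κ ≃ ι} {S : κ → E →L[ℂ] E}

lemma star_apply_hilbertBasis_of_apply_eq [DecidableEq κ] (hS : ∀ k i, S k (b i) = b (σ (i, k)))
    (k k' : κ) (i : ι) : star (S k) (b (σ (i, k'))) = if k = k' then b i else 0 := by
  classical
  refine eq_of_forall_inner_hilbertBasis_eq b fun j ↦ ?_
  have horth := orthonormal_iff_ite.1 b.orthonormal
  rw [ContinuousLinearMap.star_eq_adjoint, ContinuousLinearMap.adjoint_inner_right, hS, horth]
  by_cases hk : k = k' <;> simp [hk, horth]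

lemma sum_mul_star_eq_one_of_apply_hilbertBasis [Fintype κ]
    (hS : ∀ k i, S k (b i) = b (σ (i, k))) : ∑ k, S k * star (S k) = 1 := by
  classical
  refine continuousLinearMap_ext_hilbertBasis b fun j ↦ ?_
  obtain ⟨⟨i, k'⟩, rfl⟩ := σ.surjective j
  simp [star_apply_hilbertBasis_of_apply_eq b hS, apply_ite, hS]

end Permutation

end HilbertBasis

lemma mul_eq_self_of_mem_topologicalClosure_adjoin {𝕜 R : Type*} [CommSemiring 𝕜] [StarRing 𝕜]
    [NonUnitalSemiring R] [StarRing R] [Module 𝕜 R] [IsScalarTower 𝕜 R R] [SMulCommClass 𝕜 R R]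
    [StarModule 𝕜 R] [TopologicalSpace R] [IsTopologicalSemiring R] [ContinuousStar R]
    [ContinuousConstSMul 𝕜 R] [T2Space R] {s : Set R} {p a : R} (hp : IsSelfAdjoint p)
    (hs : ∀ a ∈ s, p * a = a ∧ a * p = a)
    (ha : a ∈ (NonUnitalStarAlgebra.adjoin 𝕜 s).topologicalClosure) : p * a = a ∧ a * p = a := by
  have hclosed : IsClosed {a : R | p * a = a ∧ a * p = a} :=
    (isClosed_eq (continuous_const_mul p) continuous_id).inter
      (isClosed_eq (continuous_mul_const p) continuous_id)
  refine closure_minimal (fun a ha ↦ ?_) hclosed ha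
  change p * a = a ∧ a * p = a
  induction ha using NonUnitalStarAlgebra.adjoin_induction with
  | mem a ha => exact hs a ha
  | add a b _ _ ha hb => rw [mul_add, add_mul, ha.1, ha.2, hb.1, hb.2]; exact ⟨rfl, rfl⟩
  | zero => exact ⟨mul_zero p, zero_mul p⟩
  | mul a b _ _ ha hb => rw [← mul_assoc, ha.1, mul_assoc, hb.2]; exact ⟨rfl, rfl⟩
  | smul r a _ ha => rw [mul_smul_comm, smul_mul_assoc, ha.1, ha.2]; exact ⟨rfl, rfl⟩
  | star a _ ha =>
    constructor
    · rw [← hp.star_eq, ← star_mul, ha.2]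
    · rw [← hp.star_eq, ← star_mul, ha.1]

section Compression

variable {ι R : Type*} [TopologicalSpace ι] [DiscreteTopology ι] [NonUnitalCStarAlgebra R]

lemma norm_compression_le {q : R} (hq : IsStarProjection q) (a : R) : ‖q * a * q‖ ≤ ‖a‖ :=
  calc ‖q * a * q‖ ≤ ‖q‖ * ‖a‖ * ‖q‖ := norm_mul₃_le
    _ ≤ 1 * ‖a‖ * 1 := by gcongr <;> exact hq.norm_le
    _ = ‖a‖ := by rw [one_mul, mul_one]

/-- The bounded family `(qᵢ a qᵢ)ᵢ` of compressions of `a` by the projections `qᵢ`; for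
`qₙ = P_{N^n}` these are the sequences generating `S_η(O_N)`. -/
noncomputable def compressionSeq {q : ι → R} (hq : ∀ i, IsStarProjection (q i)) (a : R) : ι →ᵇ R :=
  .ofNormedAddCommGroupDiscrete (fun i ↦ q i * a * q i) ‖a‖ fun i ↦ norm_compression_le (hq i) a

variable {A : Type*} [CStarAlgebra A] {q : ι → A} (hq : ∀ i, IsStarProjection (q i))

lemma compressionSeq_one_apply (i : ι) : compressionSeq hq 1 i = q i := by
  change q i * 1 * q i = q i
  rw [mul_one, (hq i).isIdempotentElem.eq]

lemma isStarProjection_compressionSeq_one : IsStarProjection (compressionSeq hq 1) := by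
  constructor
  · ext1 i
    rw [BoundedContinuousFunction.mul_apply, compressionSeq_one_apply, (hq i).isIdempotentElem.eq]
  · ext1 i
    rw [BoundedContinuousFunction.star_apply, compressionSeq_one_apply,
      (hq i).isSelfAdjoint.star_eq]

end Compression

namespace Seta

variable {H : Type*} [NormedAddCommGroup H] [InnerProductSpace ℂ H] [CompleteSpace H] {N : ℕ}
  {S : Fin N → H →L[ℂ] H} {P : ℕ → H →L[ℂ] H}

instance isClosed_coe : IsClosed (Seta S P : Set (ℕ →ᵇ (H →L[ℂ] H))) :=
  NonUnitalStarSubalgebra.isClosed_topologicalClosure _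

/-- The *-homomorphism `S_η(O_N) → B(H)` sending a sequence to its `n`-th entry. -/
noncomputable def eval (S : Fin N → H →L[ℂ] H) (P : ℕ → H →L[ℂ] H) (n : ℕ) :
    Seta S P →⋆ₙₐ[ℂ] (H →L[ℂ] H) where
  toFun x := (x : ℕ →ᵇ (H →L[ℂ] H)) n
  map_smul' _ _ := rfl
  map_zero' := rfl
  map_add' _ _ := rfl
  map_mul' _ _ := rfl
  map_star' _ := rfl

variable (hP : ∀ n, IsStarProjection (P (N ^ n)))

lemma compressionSeq_mem {A : H →L[ℂ] H}
    (hA : A ∈ (NonUnitalStarAlgebra.adjoin ℂ (Set.range S)).topologicalClosure) :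
    compressionSeq hP A ∈ Seta S P :=
  NonUnitalStarSubalgebra.le_topologicalClosure _
    (NonUnitalStarAlgebra.subset_adjoin ℂ _ ⟨A, hA, fun _ ↦ rfl⟩)

lemma mul_eq_self_of_mem {x : ℕ →ᵇ (H →L[ℂ] H)} (hx : x ∈ Seta S P) :
    compressionSeq hP 1 * x = x ∧ x * compressionSeq hP 1 = x := by
  refine mul_eq_self_of_mem_topologicalClosure_adjoin
    (isStarProjection_compressionSeq_one hP).isSelfAdjoint ?_ hx
  rintro g ⟨A, -, hg⟩
  have hPP (n : ℕ) : P (N ^ n) * P (N ^ n) = P (N ^ n) := (hP n).isIdempotentElem.eq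
  constructor <;> ext1 n
  · rw [BoundedContinuousFunction.mul_apply, compressionSeq_one_apply, hg, ← mul_assoc, ← mul_assoc,
      hPP]
  · rw [BoundedContinuousFunction.mul_apply, compressionSeq_one_apply, hg, mul_assoc, hPP]

end Seta

section Cuntz

variable {H : Type*} [NormedAddCommGroup H] [InnerProductSpace ℂ H] [CompleteSpace H] {N : ℕ}
  [NeZero N] {S : Fin N → H →L[ℂ] H}

lemma one_mem_topologicalClosure_adjoin_range (e : HilbertBasis ℕ ℂ H)
    (hS : ∀ (i : Fin N) (r : ℕ), S i (e r) = e (r * N + i)) :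
    1 ∈ (NonUnitalStarAlgebra.adjoin ℂ (Set.range S)).topologicalClosure := by
  have hmem (i : Fin N) : S i ∈ NonUnitalStarAlgebra.adjoin ℂ (Set.range S) :=
    NonUnitalStarAlgebra.subset_adjoin ℂ _ ⟨i, rfl⟩
  rw [← sum_mul_star_eq_one_of_apply_hilbertBasis e (σ := (Nat.divModEquiv N).symm) hS]
  exact NonUnitalStarSubalgebra.le_topologicalClosure _
    (sum_mem fun i _ ↦ mul_mem (hmem i) (star_mem (hmem i)))

lemma map_compressionSeq_one_eq_one {K : Type*} [NormedAddCommGroup K] [InnerProductSpace ℂ K]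
    [CompleteSpace K] {P : ℕ → H →L[ℂ] H} (hP : ∀ n, IsStarProjection (P (N ^ n)))
    (h₁ : compressionSeq hP 1 ∈ Seta S P) (f : HilbertBasis (ℕ × ℕ) ℂ K) {V : Fin N → K →L[ℂ] K}
    (hV : ∀ (i : Fin N) (m r : ℕ), V i (f (m + 1, r)) = f (m, r * N + i))
    {W : Seta S P →⋆ₙₐ[ℂ] (K →L[ℂ] K)}
    (hW : ∀ (r : Fin N) (x : Seta S P),
      (∀ n, (x : ℕ →ᵇ (H →L[ℂ] H)) n = P (N ^ n) * S r * P (N ^ n)) → W x = V r.rev) :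
    W ⟨compressionSeq hP 1, h₁⟩ = 1 := by
  have hrange (j : ℕ × ℕ) : ∃ i v, V i v = f j := by
    refine ⟨⟨j.2 % N, Nat.mod_lt _ (NeZero.pos N)⟩, f (j.1 + 1, j.2 / N), ?_⟩
    rw [hV, Nat.div_add_mod']
  refine eq_one_of_mul_eq_self f (fun i ↦ ?_) hrange
  have hmem : compressionSeq hP (S i.rev) ∈ Seta S P :=
    Seta.compressionSeq_mem hP <| NonUnitalStarSubalgebra.le_topologicalClosure _ <|
      NonUnitalStarAlgebra.subset_adjoin ℂ _ ⟨i.rev, rfl⟩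
  have hWi : W ⟨_, hmem⟩ = V i := by rw [hW i.rev _ fun _ ↦ rfl, Fin.rev_rev]
  rw [← hWi, ← map_mul]
  exact congrArg W (Subtype.ext (Seta.mul_eq_self_of_mem hP hmem).1)

end Cuntz

/-- Let `W` be any *-homomorphism from `S_η(O_N)` into the bounded
operators on `H̃` sending `(P_{N^n} S_r P_{N^n})_n` to `Σ_{N-1-r}` for each `r ∈ Ω` and whose
kernel is exactly `G_η`. Then a sequence `x ∈ S_η(O_N)` is stable — i.e. its entries
`x n : im P_{N^n} → im P_{N^n}` are eventually invertible (as `N^n × N^n` matrices, with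
inverse `B` supported on the range of `P (N^n)` and satisfying `x n * B = B * x n = P (N^n)`)
with uniformly bounded inverses — if and only if the operator `W x` is invertible. -/
theorem stmt17 {H : Type*} [NormedAddCommGroup H] [InnerProductSpace ℂ H] [CompleteSpace H]
    (e : HilbertBasis ℕ ℂ H) (N : ℕ) (hN : 2 ≤ N)
    (S : Fin N → H →L[ℂ] H)
    (hS : ∀ (i : Fin N) (r : ℕ), S i (e r) = e (r * N + (i : ℕ)))
    (P : ℕ → H →L[ℂ] H)
    (hP : ∀ n k : ℕ, P n (e k) = if k < n then e k else 0)
    {H2 : Type*} [NormedAddCommGroup H2] [InnerProductSpace ℂ H2] [CompleteSpace H2]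
    (f : HilbertBasis (ℕ × ℕ) ℂ H2)
    (Sg : Fin N → H2 →L[ℂ] H2)
    (hSg : ∀ (i : Fin N) (m r : ℕ),
      Sg i (f (m, r)) = if m = 0 then 0 else f (m - 1, r * N + (i : ℕ)))
    (W : Seta S P →⋆ₙₐ[ℂ] (H2 →L[ℂ] H2))
    (hW1 : ∀ (r : Fin N) (x : ↥(Seta S P)),
      (∀ n : ℕ, (x : BoundedContinuousFunction ℕ (H →L[ℂ] H)) n
          = P (N ^ n) * S r * P (N ^ n)) →
      W x = Sg (Fin.rev r))
    (hW2 : ∀ x : ↥(Seta S P),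
      W x = 0 ↔ Filter.Tendsto
        (fun n => ‖(x : BoundedContinuousFunction ℕ (H →L[ℂ] H)) n‖)
        Filter.atTop (nhds 0))
    (x : ↥(Seta S P)) :
    (∃ (n₀ : ℕ) (C : ℝ), ∀ n : ℕ, n₀ ≤ n →
      ∃ B : H →L[ℂ] H, B = P (N ^ n) * B * P (N ^ n) ∧
        (x : BoundedContinuousFunction ℕ (H →L[ℂ] H)) n * B = P (N ^ n) ∧
        B * (x : BoundedContinuousFunction ℕ (H →L[ℂ] H)) n = P (N ^ n) ∧
        ‖B‖ ≤ C) ↔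
    IsUnit (W x) := by
  have : NeZero N := ⟨by lia⟩
  have hQ (n : ℕ) : IsStarProjection (P (N ^ n)) := isStarProjection_of_apply_hilbertBasis e (hP _)
  have hmem : compressionSeq hQ 1 ∈ Seta S P :=
    Seta.compressionSeq_mem hQ (one_mem_topologicalClosure_adjoin_range e hS)
  let p : Seta S P := ⟨compressionSeq hQ 1, hmem⟩
  have hp : IsStarProjection p :=
    ⟨Subtype.ext (isStarProjection_compressionSeq_one hQ).isIdempotentElem,
      Subtype.ext (isStarProjection_compressionSeq_one hQ).isSelfAdjoint⟩
  have hpx : p * x = x := Subtype.ext (Seta.mul_eq_self_of_mem hQ x.2).1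
  have hxp : x * p = x := Subtype.ext (Seta.mul_eq_self_of_mem hQ x.2).2
  have hWp : W p = 1 := map_compressionSeq_one_eq_one hQ hmem f (by simp [hSg]) hW1
  have hpn (n : ℕ) : Seta.eval S P n p = P (N ^ n) := compressionSeq_one_apply hQ n
  have hiff : (∃ C, ∀ᶠ n in atTop, HasCornerInverse (P (N ^ n)) (Seta.eval S P n x) C) ↔
      ∃ C, HasCornerInverse (W p) (W x) C := by
    simpa only [hpn] using
      exists_eventually_hasCornerInverse_iff (A := Seta S P) (π := Seta.eval S P) hW2 hp hpx hxp
  simp only [hWp, exists_hasCornerInverse_one_iff, eventually_atTop] at hiff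
  rw [← hiff, exists_comm]
  rfl
end

section
/- The algebra S_η(O_N) is fractal; concretely: for every sequence (A_n) ∈ S_η(O_N) the limit lim_{n→∞}‖A_n‖ exists, and in particular, if some subsequence (A_{n_k}) satisfies ‖A_{n_k}‖ → 0, then ‖A_n‖ → 0. -/
set_option synthInstance.maxHeartbeats 1000000
set_option maxHeartbeats 1000000

/-!
The projections satisfy `P (N ^ (n + 1)) = Φ (P (N ^ n))`, where `Φ a = ∑ i, S i * a * star (S i)`
is the canonical endomorphism. Fix letters `i ≠ j` and `k ≥ n`. The isometries
`V p = Φ ^ p (S i ^ k * S j)` with `p < n` have pairwise orthogonal ranges, so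
`W = n ^ (-1/2) * ∑ p < n, V p` is an isometry. It satisfies
`Φ ^ (n + k + 1) a * W = W * Φ ^ n a` for every `a`, while `S m * V p = V (p + 1) * S m` makes the
commutators of `W` with `S m` and `star (S m)` telescope, leaving `O(n ^ (-1/2))`. Hence, for every
sequence `x` of the algebra, `x (n + k + 1) * W - W * x n` tends to `0` as `n → ∞`, uniformly in
`k ≥ n`. As `W` is an isometry, `‖x n‖ ≤ ‖x m‖ + ε` as soon as `n` is large and `m > 2 * n`, which
forces `‖x n‖` to converge.
-/

open Filter Topology
open scoped BoundedContinuousFunction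

theorem exists_tendsto_of_eventually_eventually_le_add {α : Type*} {l : Filter α} {u : α → ℝ}
    (hle : l.IsBoundedUnder (· ≤ ·) u) (hge : l.IsBoundedUnder (· ≥ ·) u)
    (h : ∀ ε > 0, ∀ᶠ m in l, ∀ᶠ n in l, u m ≤ u n + ε) : ∃ L, Tendsto u l (𝓝 L) := by
  refine tendsto_of_no_upcrossings dense_univ ?_ hle hge
  rintro a - b - hab ⟨hlow, hhigh⟩
  obtain ⟨m, hbm, hm⟩ := (hhigh.and_eventually (h (b - a) (sub_pos.mpr hab))).exists
  obtain ⟨n, hna, hmn⟩ := (hlow.and_eventually hm).exists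
  linarith

theorem star_pow_mul_pow_eq_one {M : Type*} [Monoid M] [StarMul M] {s : M} (h : star s * s = 1)
    (n : ℕ) : star (s ^ n) * s ^ n = 1 := by
  induction n with
  | zero => simp
  | succ n ih => rw [pow_succ', star_mul, mul_assoc, ← mul_assoc (star s), h, one_mul, ih]

theorem norm_mul_eq_of_star_mul_mul {A : Type*} [NonUnitalNormedRing A] [StarRing A]
    [CStarRing A] {w a : A} (h : star w * (w * a) = a) : ‖w * a‖ = ‖a‖ := by
  rw [← mul_self_inj (norm_nonneg _) (norm_nonneg _), ← CStarRing.norm_star_mul_self,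
    ← CStarRing.norm_star_mul_self, star_mul, mul_assoc, h]

theorem norm_le_one_of_star_mul_self {A : Type*} [NormedRing A] [StarRing A] [CStarRing A]
    {w : A} (h : star w * w = 1) : ‖w‖ ≤ 1 := by
  have hone : ‖(1 : A)‖ ≤ 1 := (IsStarProjection.one A).norm_le
  calc ‖w‖ = ‖w * 1‖ := by rw [mul_one]
    _ = ‖(1 : A)‖ := norm_mul_eq_of_star_mul_mul (by rw [mul_one, h])
    _ ≤ 1 := hone

theorem tendsto_inv_sqrt_fst_mul (C : ℝ) :
    Tendsto (fun q : ℕ × ℕ => (√q.1)⁻¹ * C) (comap Prod.fst atTop) (𝓝 0) := by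
  have hsqrt : Tendsto (fun n : ℕ => (√n)⁻¹) atTop (𝓝 0) :=
    (Real.tendsto_sqrt_atTop.comp tendsto_natCast_atTop_atTop).inv_tendsto_atTop
  rw [← zero_mul C]
  exact (hsqrt.comp tendsto_comap).mul_const C

section NormalizedSum

/-- The mean `n^{-1/2} (V 0 + ⋯ + V (n - 1))`, scaled so that isometries `V p` with pairwise
orthogonal ranges have an isometry as their mean; it is `0` for `n = 0`. -/
noncomputable def normalizedSum {A : Type*} [AddCommMonoid A] [Module ℝ A] (V : ℕ → A) (n : ℕ) :
    A :=
  (√n)⁻¹ • ∑ p ∈ Finset.range n, V p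

theorem star_normalizedSum_mul_self {A : Type*} [Ring A] [StarRing A] [Algebra ℝ A]
    [StarModule ℝ A] {V : ℕ → A} {n : ℕ} (hn : 0 < n) (hV : ∀ p, star (V p) * V p = 1)
    (hVV : ∀ p < n, ∀ q < n, p ≠ q → star (V p) * V q = 0) :
    star (normalizedSum V n) * normalizedSum V n = 1 := by
  have hsum : star (∑ p ∈ Finset.range n, V p) * ∑ p ∈ Finset.range n, V p = (n : ℝ) • 1 := by
    rw [star_sum, Finset.sum_mul_sum]
    calc ∑ p ∈ Finset.range n, ∑ q ∈ Finset.range n, star (V p) * V q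
        = ∑ _ ∈ Finset.range n, (1 : A) := Finset.sum_congr rfl fun p hp => by
          rw [Finset.sum_eq_single_of_mem p hp fun q hq hqp =>
            hVV p (Finset.mem_range.mp hp) q (Finset.mem_range.mp hq) hqp.symm, hV]
      _ = (n : ℝ) • 1 := by simp [Algebra.smul_def]
  have hscale : (√n)⁻¹ * ((√n)⁻¹ * (n : ℝ)) = 1 := by
    rw [← mul_assoc, ← mul_inv, Real.mul_self_sqrt n.cast_nonneg,
      inv_mul_cancel₀ (Nat.cast_ne_zero.mpr hn.ne')]
  rw [normalizedSum, star_smul, star_trivial, smul_mul_smul_comm, hsum, smul_smul, mul_assoc,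
    hscale, one_smul]

section Commutation

variable {A : Type*} [NormedRing A] [NormedAlgebra ℝ A] {V : ℕ → A} {a b : A}

theorem mul_normalizedSum_eq {n : ℕ} (h : ∀ p < n, a * V p = V p * b) :
    a * normalizedSum V n = normalizedSum V n * b := by
  simp only [normalizedSum, mul_smul_comm, smul_mul_assoc, Finset.mul_sum, Finset.sum_mul]
  congr 1
  exact Finset.sum_congr rfl fun p hp => h p (Finset.mem_range.mp hp)

theorem norm_mul_normalizedSum_sub_le (hV : ∀ p, ‖V p‖ ≤ 1)
    (h : ∀ p, a * V p = V (p + 1) * b) (n : ℕ) :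
    ‖a * normalizedSum V n - normalizedSum V n * b‖ ≤ (√n)⁻¹ * (2 * ‖b‖) := by
  have htelescope : a * normalizedSum V n - normalizedSum V n * b
      = (√n)⁻¹ • ((V n - V 0) * b) := by
    simp only [normalizedSum, mul_smul_comm, smul_mul_assoc, ← smul_sub, Finset.mul_sum, h,
      ← Finset.sum_range_sub, Finset.sum_mul, sub_mul, Finset.sum_sub_distrib]
  rw [htelescope, norm_smul, Real.norm_of_nonneg (by positivity)]
  gcongr
  exact (norm_mul_le _ _).trans
    (by gcongr; linarith [norm_sub_le (V n) (V 0), hV n, hV 0])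

theorem norm_mul_normalizedSum_sub_le' (hV : ∀ p, ‖V p‖ ≤ 1)
    (h : ∀ p, a * V (p + 1) = V p * b) (n : ℕ) :
    ‖a * normalizedSum V n - normalizedSum V n * b‖ ≤ (√n)⁻¹ * (2 * ‖a‖) := by
  have htelescope : a * normalizedSum V n - normalizedSum V n * b
      = (√n)⁻¹ • (a * (V 0 - V n)) := by
    simp only [normalizedSum, mul_smul_comm, smul_mul_assoc, ← smul_sub, Finset.sum_mul, ← h,
      ← Finset.sum_range_sub', Finset.mul_sum, mul_sub, Finset.sum_sub_distrib]
  rw [htelescope, norm_smul, Real.norm_of_nonneg (by positivity), mul_comm 2]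
  gcongr
  exact (norm_mul_le _ _).trans
    (by gcongr; linarith [norm_sub_le (V 0) (V n), hV n, hV 0])

end Commutation

end NormalizedSum

section AsymptoticIntertwiner

variable {ι A B : Type*} [NonUnitalCStarAlgebra A] [NonUnitalCStarAlgebra B] {l : Filter ι}
  {φ ψ : ι → B →⋆ₙₐ[ℂ] A} {W : ι → A} {x y : B}

/-- The operators `W i` asymptotically intertwine `ψ i x` and `φ i x` along `l`. -/
def AsymptoticallyIntertwines (l : Filter ι) (φ ψ : ι → B →⋆ₙₐ[ℂ] A) (W : ι → A) (x : B) :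
    Prop :=
  Tendsto (fun i => φ i x * W i - W i * ψ i x) l (𝓝 0)

namespace AsymptoticallyIntertwines

theorem zero : AsymptoticallyIntertwines l φ ψ W 0 := by
  simpa [AsymptoticallyIntertwines] using tendsto_const_nhds

theorem add (hx : AsymptoticallyIntertwines l φ ψ W x)
    (hy : AsymptoticallyIntertwines l φ ψ W y) :
    AsymptoticallyIntertwines l φ ψ W (x + y) := by
  simpa only [AsymptoticallyIntertwines, map_add, add_mul, mul_add, add_sub_add_comm, add_zero]
    using Tendsto.add hx hy

theorem smul (c : ℂ) (hx : AsymptoticallyIntertwines l φ ψ W x) :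
    AsymptoticallyIntertwines l φ ψ W (c • x) := by
  simpa only [AsymptoticallyIntertwines, map_smul, smul_mul_assoc, mul_smul_comm, smul_sub,
    smul_zero] using Tendsto.const_smul hx c

theorem mul (hx : AsymptoticallyIntertwines l φ ψ W x)
    (hy : AsymptoticallyIntertwines l φ ψ W y) :
    AsymptoticallyIntertwines l φ ψ W (x * y) := by
  have hleft : Tendsto (fun i => φ i x * (φ i y * W i - W i * ψ i y)) l (𝓝 0) :=
    Filter.isBoundedUnder_le_mul_tendsto_zero
      (isBoundedUnder_of ⟨‖x‖, fun i => NonUnitalStarAlgHom.norm_apply_le (φ i) x⟩) hy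
  have hright : Tendsto (fun i => (φ i x * W i - W i * ψ i x) * ψ i y) l (𝓝 0) :=
    Tendsto.zero_mul_isBoundedUnder_le hx
      (isBoundedUnder_of ⟨‖y‖, fun i => NonUnitalStarAlgHom.norm_apply_le (ψ i) y⟩)
  have hsum := hleft.add hright
  rw [add_zero] at hsum
  refine hsum.congr fun i => ?_
  rw [map_mul, map_mul]
  noncomm_ring

theorem isClosed_setOf (hW : l.IsBoundedUnder (· ≤ ·) (‖W ·‖)) :
    IsClosed {x | AsymptoticallyIntertwines l φ ψ W x} := by
  obtain ⟨C, hC⟩ := hW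
  refine isClosed_of_closure_subset fun x hx => ?_
  rw [Set.mem_ofPred_eq, AsymptoticallyIntertwines, Metric.tendsto_nhds]
  intro ε hε
  have hsmall : ∀ᶠ y in 𝓝 x, ‖x - y‖ * C + C * ‖x - y‖ < ε / 2 := by
    refine Tendsto.eventually_lt_const (v := 0) (by positivity) ?_
    exact Continuous.tendsto' (by fun_prop) _ _ (by simp)
  obtain ⟨y, hy, hxy⟩ := ((mem_closure_iff_frequently.mp hx).and_eventually hsmall).exists
  filter_upwards [eventually_map.mp hC, Metric.tendsto_nhds.mp hy (ε / 2) (half_pos hε)]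
    with i hWi hyi
  rw [dist_zero_right] at hyi ⊢
  calc ‖φ i x * W i - W i * ψ i x‖
      = ‖(φ i y * W i - W i * ψ i y) + (φ i (x - y) * W i - W i * ψ i (x - y))‖ := by
        rw [map_sub, map_sub]
        noncomm_ring
    _ ≤ ‖φ i y * W i - W i * ψ i y‖ + (‖φ i (x - y) * W i‖ + ‖W i * ψ i (x - y)‖) :=
        (norm_add_le _ _).trans (by gcongr; exact norm_sub_le _ _)
    _ ≤ ‖φ i y * W i - W i * ψ i y‖ + (‖x - y‖ * C + C * ‖x - y‖) := by
        have : 0 ≤ C := (norm_nonneg _).trans hWi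
        gcongr
        · exact norm_mul_le_of_le (NonUnitalStarAlgHom.norm_apply_le (φ i) _) hWi
        · exact norm_mul_le_of_le hWi (NonUnitalStarAlgHom.norm_apply_le (ψ i) _)
    _ < ε := by linarith

end AsymptoticallyIntertwines

variable (l φ ψ W) in
/-- The largest star-subalgebra of `B` whose elements are asymptotically intertwined by `W`. The
condition on `star x` is imposed separately, as it does not follow from the one on `x`. -/
def asymptoticIntertwiner : NonUnitalStarSubalgebra ℂ B where
  carrier := {x | AsymptoticallyIntertwines l φ ψ W x ∧
    AsymptoticallyIntertwines l φ ψ W (star x)}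
  add_mem' hx hy := ⟨hx.1.add hy.1, star_add (R := B) _ _ ▸ hx.2.add hy.2⟩
  zero_mem' := ⟨.zero, (star_zero B).symm ▸ .zero⟩
  mul_mem' hx hy := ⟨hx.1.mul hy.1, star_mul (R := B) _ _ ▸ hy.2.mul hx.2⟩
  smul_mem' c x hx := ⟨hx.1.smul c, star_smul c x ▸ hx.2.smul (star c)⟩
  star_mem' hx := ⟨hx.2, (star_star (R := B) _).symm ▸ hx.1⟩

theorem isClosed_asymptoticIntertwiner (hW : l.IsBoundedUnder (· ≤ ·) (‖W ·‖)) :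
    IsClosed (asymptoticIntertwiner l φ ψ W : Set B) :=
  (AsymptoticallyIntertwines.isClosed_setOf hW).inter
    ((AsymptoticallyIntertwines.isClosed_setOf hW).preimage continuous_star)

theorem topologicalClosure_adjoin_le_asymptoticIntertwiner {s : Set B}
    (hW : l.IsBoundedUnder (· ≤ ·) (‖W ·‖)) (hs : s ⊆ asymptoticIntertwiner l φ ψ W) :
    (NonUnitalStarAlgebra.adjoin ℂ s).topologicalClosure ≤ asymptoticIntertwiner l φ ψ W :=
  NonUnitalStarSubalgebra.topologicalClosure_minimal _ (NonUnitalStarAlgebra.adjoin_le hs)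
    (isClosed_asymptoticIntertwiner hW)

end AsymptoticIntertwiner

theorem AsymptoticallyIntertwines.eventually_norm_le_add {ι A B : Type*} [CStarAlgebra A]
    [NonUnitalCStarAlgebra B] {l : Filter ι} {φ ψ : ι → B →⋆ₙₐ[ℂ] A} {W : ι → A} {x : B}
    (hx : AsymptoticallyIntertwines l φ ψ W x) (hW : ∀ᶠ i in l, star (W i) * W i = 1) {ε : ℝ}
    (hε : 0 < ε) : ∀ᶠ i in l, ‖ψ i x‖ ≤ ‖φ i x‖ + ε := by
  filter_upwards [hW, Metric.tendsto_nhds.mp hx ε hε] with i hWi hxi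
  rw [dist_zero_right] at hxi
  calc ‖ψ i x‖ = ‖W i * ψ i x‖ :=
        (norm_mul_eq_of_star_mul_mul (by rw [← mul_assoc, hWi, one_mul])).symm
    _ = ‖φ i x * W i - (φ i x * W i - W i * ψ i x)‖ := by rw [sub_sub_cancel]
    _ ≤ ‖φ i x * W i‖ + ‖φ i x * W i - W i * ψ i x‖ := norm_sub_le _ _
    _ ≤ ‖φ i x‖ + ε := by
        gcongr
        exact (norm_mul_le _ _).trans
          (mul_le_of_le_one_right (norm_nonneg _) (norm_le_one_of_star_mul_self hWi))

/-- A family of isometries `S i` with pairwise orthogonal ranges that add up to the identity, that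
is, a representation of the generators of a Cuntz algebra. Orthogonality, which follows from the
other two fields in a C⋆-algebra, is a field so that the notion makes sense in any star ring. -/
structure IsCuntzFamily {ι A : Type*} [Fintype ι] [Ring A] [StarRing A] (S : ι → A) : Prop where
  star_mul_self (i : ι) : star (S i) * S i = 1
  star_mul_of_ne {i j : ι} (hij : i ≠ j) : star (S i) * S j = 0
  sum_mul_star : ∑ i, S i * star (S i) = 1

namespace IsCuntzFamily

section Algebraic

variable {ι A : Type*} [Fintype ι] [Ring A] [StarRing A] {S : ι → A} {R : Type*} [CommSemiring R]
  [Algebra R A]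

variable (R) in
/-- The canonical endomorphism `a ↦ ∑ i, S i * a * star (S i)` of an algebra with a Cuntz
family. -/
def canonicalEndomorphism (hS : IsCuntzFamily S) : A →⋆ₐ[R] A where
  toFun a := ∑ i, S i * a * star (S i)
  map_one' := by simp only [mul_one, hS.sum_mul_star]
  map_mul' a b := by
    rw [Finset.sum_mul_sum]
    refine Finset.sum_congr rfl fun i _ => ?_
    rw [Finset.sum_eq_single_of_mem i (Finset.mem_univ i) fun j _ hji => by
      rw [mul_assoc, mul_assoc (S j), ← mul_assoc (star (S i)), hS.star_mul_of_ne hji.symm,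
        zero_mul, mul_zero]]
    simp only [mul_assoc]
    rw [← mul_assoc (star (S i)) (S i), hS.star_mul_self, one_mul]
  map_zero' := by simp only [mul_zero, zero_mul, Finset.sum_const_zero]
  map_add' a b := by simp only [mul_add, add_mul, Finset.sum_add_distrib]
  commutes' c := by
    simp only [← Algebra.commutes c, mul_assoc, ← Finset.mul_sum, hS.sum_mul_star, mul_one]
  map_star' a := by simp only [star_sum, star_mul, star_star, mul_assoc]

variable (hS : IsCuntzFamily S)

local notation "Φ" => canonicalEndomorphism R hS

theorem canonicalEndomorphism_apply (a : A) : Φ a = ∑ i, S i * a * star (S i) :=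
  rfl

theorem semiconjBy_canonicalEndomorphism (i : ι) (a : A) : SemiconjBy (S i) a (Φ a) := by
  rw [SemiconjBy, canonicalEndomorphism_apply, Finset.sum_mul,
    Finset.sum_eq_single_of_mem i (Finset.mem_univ i) fun j _ hji => by
      rw [mul_assoc, hS.star_mul_of_ne hji, mul_zero],
    mul_assoc, hS.star_mul_self, mul_one]

theorem star_semiconjBy_canonicalEndomorphism (i : ι) (a : A) :
    SemiconjBy (star (S i)) (Φ a) a := by
  simpa only [SemiconjBy, star_mul, map_star, star_star] using
    (congrArg star (hS.semiconjBy_canonicalEndomorphism i (star a))).symm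

theorem eq_canonicalEndomorphism {a b : A} (h : ∀ i, SemiconjBy (S i) a b) : b = Φ a := by
  simp only [canonicalEndomorphism_apply, (h _).eq, mul_assoc, ← Finset.mul_sum,
    hS.sum_mul_star, mul_one]

theorem canonicalEndomorphism_pow_succ_apply (n : ℕ) (a : A) :
    (Φ ^ (n + 1)) a = Φ ((Φ ^ n) a) := by
  rw [pow_succ']; rfl

theorem canonicalEndomorphism_pow_add_apply (m n : ℕ) (a : A) :
    (Φ ^ (m + n)) a = (Φ ^ m) ((Φ ^ n) a) := by
  rw [pow_add]; rfl

theorem pow_semiconjBy_canonicalEndomorphism_pow (i : ι) (n : ℕ) (a : A) :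
    SemiconjBy (S i ^ n) a ((Φ ^ n) a) := by
  induction n with
  | zero => rw [pow_zero, pow_zero]; exact SemiconjBy.one_left a
  | succ n ih =>
    rw [pow_succ', canonicalEndomorphism_pow_succ_apply]
    exact (hS.semiconjBy_canonicalEndomorphism i _).mul_left ih

theorem star_pow_semiconjBy_canonicalEndomorphism_pow (i : ι) (n : ℕ) (a : A) :
    SemiconjBy (star (S i ^ n)) ((Φ ^ n) a) a := by
  simpa only [SemiconjBy, star_mul, map_star, star_star] using
    (congrArg star (hS.pow_semiconjBy_canonicalEndomorphism_pow (R := R) i n (star a))).symm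

variable (R) in
/-- The isometry `Φ ^ p (S i ^ k * S j)`, where `Φ` is the canonical endomorphism. For the Cuntz
family of the shifts `e r ↦ e (r * N + i)` it inserts the block `j i ⋯ i` of `k + 1` digits above
the lowest `p` base-`N` digits of the index of a basis vector. -/
def digitInsertion (i j : ι) (k p : ℕ) : A :=
  (canonicalEndomorphism R hS ^ p) (S i ^ k * S j)

local notation "V" => digitInsertion R hS

variable (i j m : ι) (k p q : ℕ)

theorem star_digitInsertion_mul_self : star (V i j k p) * V i j k p = 1 := by
  rw [digitInsertion, ← map_star, ← map_mul, star_mul, mul_assoc, ← mul_assoc (star (S i ^ k)),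
    star_pow_mul_pow_eq_one (hS.star_mul_self i), one_mul, hS.star_mul_self, map_one]

theorem mul_digitInsertion : S m * V i j k p = V i j k (p + 1) * S m := by
  rw [digitInsertion, digitInsertion, canonicalEndomorphism_pow_succ_apply]
  exact hS.semiconjBy_canonicalEndomorphism m _

theorem star_mul_digitInsertion_succ :
    star (S m) * V i j k (p + 1) = V i j k p * star (S m) := by
  rw [digitInsertion, digitInsertion, canonicalEndomorphism_pow_succ_apply]
  exact hS.star_semiconjBy_canonicalEndomorphism m _

variable {i j k p q}

theorem star_digitInsertion_mul_of_lt (hij : i ≠ j) (hpq : p < q) (hqk : q ≤ p + k) :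
    star (V i j k p) * V i j k q = 0 := by
  obtain ⟨d, rfl⟩ := Nat.exists_eq_add_of_lt hpq
  obtain ⟨m, rfl⟩ := Nat.exists_eq_add_of_le (show d + 1 ≤ k by omega)
  set w := S i ^ (d + 1 + m) * S j with hw
  have hstar : star w = star (S i ^ m * S j) * star (S i ^ (d + 1)) := by
    rw [hw, pow_add, mul_assoc, star_mul]
  have hword : star (S i ^ m * S j) * w = 0 := by
    rw [hw, add_comm (d + 1), pow_add, pow_succ', star_mul]
    calc star (S j) * star (S i ^ m) * (S i ^ m * (S i * S i ^ d) * S j)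
        = star (S j) * (star (S i ^ m) * S i ^ m) * S i * S i ^ d * S j := by noncomm_ring
      _ = 0 := by
        rw [star_pow_mul_pow_eq_one (hS.star_mul_self i), mul_one, hS.star_mul_of_ne hij.symm,
          zero_mul, zero_mul]
  have hshift : star w * (Φ ^ (d + 1)) w = 0 := by
    rw [hstar, mul_assoc, (hS.star_pow_semiconjBy_canonicalEndomorphism_pow i (d + 1) w).eq,
      ← mul_assoc, hword, zero_mul]
  rw [digitInsertion, digitInsertion, add_assoc p, canonicalEndomorphism_pow_add_apply,
    ← map_star, ← map_mul, hshift, map_zero]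

theorem star_digitInsertion_mul_of_ne (hij : i ≠ j) (hpk : p < k) (hqk : q < k) (hpq : p ≠ q) :
    star (V i j k p) * V i j k q = 0 := by
  rcases hpq.lt_or_gt with hlt | hgt
  · exact hS.star_digitInsertion_mul_of_lt hij hlt (by omega)
  · simpa only [star_mul, star_star, star_zero] using
      congrArg star (hS.star_digitInsertion_mul_of_lt (R := R) hij hgt (by omega))

theorem canonicalEndomorphism_pow_mul_digitInsertion {n : ℕ} (hpn : p ≤ n) (a : A) :
    (Φ ^ (n + k + 1)) a * V i j k p = V i j k p * (Φ ^ n) a := by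
  obtain ⟨d, rfl⟩ := Nat.exists_eq_add_of_le hpn
  have hword : SemiconjBy (S i ^ k * S j) ((Φ ^ d) a) ((Φ ^ (k + (1 + d))) a) := by
    rw [canonicalEndomorphism_pow_add_apply, canonicalEndomorphism_pow_add_apply, pow_one]
    exact (hS.pow_semiconjBy_canonicalEndomorphism_pow i k _).mul_left
      (hS.semiconjBy_canonicalEndomorphism j _)
  rw [show p + d + k + 1 = p + (k + (1 + d)) by ring,
    hS.canonicalEndomorphism_pow_add_apply p (k + (1 + d)),
    hS.canonicalEndomorphism_pow_add_apply p d, digitInsertion, ← map_mul, ← map_mul, hword.eq]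

end Algebraic

section CStarAlgebra

variable {ι A : Type*} [Fintype ι] [CStarAlgebra A] {S : ι → A} (hS : IsCuntzFamily S) {i j : ι}

/-- The normalized sum of the first `q.1` digit insertions; inserting at least `q.1` digits makes
their ranges orthogonal. It is studied along the filter `comap Prod.fst atTop`, that is, as `q.1`
tends to infinity and uniformly in `q.2`. -/
noncomputable def digitInsertionMean (i j : ι) (q : ℕ × ℕ) : A :=
  normalizedSum (hS.digitInsertion ℂ i j (q.1 + q.2)) q.1

local notation "W" => digitInsertionMean hS

theorem norm_digitInsertion_le_one (k p : ℕ) : ‖hS.digitInsertion ℂ i j k p‖ ≤ 1 :=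
  norm_le_one_of_star_mul_self (hS.star_digitInsertion_mul_self i j k p)

theorem eventually_star_digitInsertionMean_mul_self (hij : i ≠ j) :
    ∀ᶠ q in comap Prod.fst atTop, star (W i j q) * W i j q = 1 := by
  filter_upwards [tendsto_comap.eventually (eventually_gt_atTop 0)] with q hq
  exact star_normalizedSum_mul_self hq (fun p => hS.star_digitInsertion_mul_self i j _ p)
    fun p hp p' hp' hne => hS.star_digitInsertion_mul_of_ne hij (by omega) (by omega) hne

theorem isBoundedUnder_norm_digitInsertionMean (hij : i ≠ j) :
    (comap Prod.fst atTop).IsBoundedUnder (· ≤ ·) (‖W i j ·‖) :=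
  isBoundedUnder_of_eventually_le <|
    (hS.eventually_star_digitInsertionMean_mul_self hij).mono fun _ => norm_le_one_of_star_mul_self

theorem canonicalEndomorphism_pow_mul_digitInsertionMean (a : A) (q : ℕ × ℕ) :
    (canonicalEndomorphism ℂ hS ^ (q.1 + (q.1 + q.2) + 1)) a * W i j q =
      W i j q * (canonicalEndomorphism ℂ hS ^ q.1) a :=
  mul_normalizedSum_eq fun _ hp => hS.canonicalEndomorphism_pow_mul_digitInsertion hp.le a

/-- The star-algebra of the operators that asymptotically commute with the digit insertion
means. -/
noncomputable def asymptoticCommutant (i j : ι) : NonUnitalStarSubalgebra ℂ A :=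
  asymptoticIntertwiner (comap Prod.fst atTop) (fun _ => NonUnitalStarAlgHom.id ℂ A)
    (fun _ => NonUnitalStarAlgHom.id ℂ A) (digitInsertionMean hS i j)

theorem topologicalClosure_adjoin_le_asymptoticCommutant (hij : i ≠ j) :
    (NonUnitalStarAlgebra.adjoin ℂ (Set.range S)).topologicalClosure ≤
      hS.asymptoticCommutant i j := by
  refine topologicalClosure_adjoin_le_asymptoticIntertwiner
    (hS.isBoundedUnder_norm_digitInsertionMean hij) ?_
  rintro _ ⟨m, rfl⟩
  exact ⟨squeeze_zero_norm
      (fun q => norm_mul_normalizedSum_sub_le (hS.norm_digitInsertion_le_one _)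
        (hS.mul_digitInsertion i j m _) q.1) (tendsto_inv_sqrt_fst_mul _),
    squeeze_zero_norm
      (fun q => norm_mul_normalizedSum_sub_le' (hS.norm_digitInsertion_le_one _)
        (hS.star_mul_digitInsertion_succ i j m _) q.1) (tendsto_inv_sqrt_fst_mul _)⟩

end CStarAlgebra

end IsCuntzFamily

section BoundedSequences

variable {A : Type*} [CStarAlgebra A]

/-- Evaluation at `x` as a morphism of C⋆-algebras. -/
def evalNonUnitalStarAlgHom {X : Type*} [TopologicalSpace X] (x : X) : (X →ᵇ A) →⋆ₙₐ[ℂ] A where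
  toFun f := f x
  map_smul' _ _ := rfl
  map_zero' := rfl
  map_add' _ _ := rfl
  map_mul' _ _ := rfl
  map_star' _ := rfl

/-- The finite sections algebra of `D ⊆ A` with respect to `Q`, that is, the closed star-algebra
of bounded sequences generated by the compressions `(Q n * a * Q n)` with `a ∈ D`. -/
noncomputable def finiteSectionsAlgebra (D : Set A) (Q : ℕ → A) :
    NonUnitalStarSubalgebra ℂ (ℕ →ᵇ A) :=
  (NonUnitalStarAlgebra.adjoin ℂ
    {g : ℕ →ᵇ A | ∃ a ∈ D, ∀ n, g n = Q n * a * Q n}).topologicalClosure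

variable {ι : Type*} [Fintype ι] {S : ι → A} (hS : IsCuntzFamily S) {i j : ι}

namespace IsCuntzFamily

/-- The algebra of the bounded sequences `x` such that `x (2 * n + k + 1)` and `x n` are
asymptotically intertwined, as `n → ∞`, by the mean of `n` insertions of `n + k + 1` digits. -/
noncomputable def asymptoticSequenceCommutant (i j : ι) : NonUnitalStarSubalgebra ℂ (ℕ →ᵇ A) :=
  asymptoticIntertwiner (comap Prod.fst atTop)
    (fun q => evalNonUnitalStarAlgHom (q.1 + (q.1 + q.2) + 1))
    (fun q => evalNonUnitalStarAlgHom q.1) (hS.digitInsertionMean i j)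

theorem const_mem_asymptoticSequenceCommutant {a : A} (ha : a ∈ hS.asymptoticCommutant i j) :
    BoundedContinuousFunction.const ℕ a ∈ hS.asymptoticSequenceCommutant i j :=
  ha

/-- The orbit of `a` under the canonical endomorphism, as a bounded sequence. -/
noncomputable def orbit (a : A) : ℕ →ᵇ A :=
  .ofNormedAddCommGroupDiscrete (fun n => (canonicalEndomorphism ℂ hS ^ n) a) ‖a‖
    fun n => NonUnitalStarAlgHom.norm_apply_le (canonicalEndomorphism ℂ hS ^ n) a

theorem orbit_mem_asymptoticSequenceCommutant (a : A) :
    hS.orbit a ∈ hS.asymptoticSequenceCommutant i j := by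
  have hcomm (b : A) (q : ℕ × ℕ) := hS.canonicalEndomorphism_pow_mul_digitInsertionMean
    (i := i) (j := j) b q
  have horbit (b : A) : AsymptoticallyIntertwines (comap Prod.fst atTop)
      (fun q : ℕ × ℕ => evalNonUnitalStarAlgHom (q.1 + (q.1 + q.2) + 1))
      (fun q => evalNonUnitalStarAlgHom q.1) (hS.digitInsertionMean i j) (hS.orbit b) :=
    tendsto_const_nhds.congr fun q => (sub_eq_zero.mpr (hcomm b q)).symm
  have hstar : star (hS.orbit a) = hS.orbit (star a) := by
    ext n
    exact (map_star (canonicalEndomorphism ℂ hS ^ n) a).symm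
  exact ⟨horbit a, hstar ▸ horbit (star a)⟩

theorem eq_orbit {Q : ℕ → A} (hQ : ∀ n i, SemiconjBy (S i) (Q n) (Q (n + 1))) (n : ℕ) :
    Q n = hS.orbit (Q 0) n := by
  induction n with
  | zero => rfl
  | succ n ih =>
    rw [hS.eq_canonicalEndomorphism (R := ℂ) (hQ n), ih]
    exact (hS.canonicalEndomorphism_pow_succ_apply n (Q 0)).symm

theorem finiteSectionsAlgebra_le_asymptoticSequenceCommutant (hij : i ≠ j) {Q : ℕ → A}
    (hQ : ∀ n i, SemiconjBy (S i) (Q n) (Q (n + 1))) :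
    finiteSectionsAlgebra (NonUnitalStarAlgebra.adjoin ℂ (Set.range S)).topologicalClosure Q ≤
      hS.asymptoticSequenceCommutant i j := by
  refine topologicalClosure_adjoin_le_asymptoticIntertwiner
    (hS.isBoundedUnder_norm_digitInsertionMean hij) ?_
  rintro g ⟨a, ha, hg⟩
  have hgen : g = hS.orbit (Q 0) * .const ℕ a * hS.orbit (Q 0) := by
    ext n
    rw [hg, hS.eq_orbit hQ]
    rfl
  have hconst := hS.const_mem_asymptoticSequenceCommutant
    (hS.topologicalClosure_adjoin_le_asymptoticCommutant hij ha)
  have horbit := hS.orbit_mem_asymptoticSequenceCommutant (i := i) (j := j) (Q 0)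
  rw [hgen]
  exact mul_mem (mul_mem horbit hconst) horbit

theorem exists_tendsto_norm_of_mem_asymptoticSequenceCommutant (hij : i ≠ j) {x : ℕ →ᵇ A}
    (hx : x ∈ hS.asymptoticSequenceCommutant i j) : ∃ L, Tendsto (‖x ·‖) atTop (𝓝 L) := by
  refine exists_tendsto_of_eventually_eventually_le_add
    (isBoundedUnder_of ⟨‖x‖, x.norm_coe_le_norm⟩) (isBoundedUnder_of ⟨0, fun n => norm_nonneg _⟩)
    fun ε hε => ?_
  have hle := hx.1.eventually_norm_le_add (hS.eventually_star_digitInsertionMean_mul_self hij) hε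
  filter_upwards [eventually_comap.mp hle] with n hn
  filter_upwards [eventually_gt_atTop (2 * n)] with m hm
  obtain ⟨k, rfl⟩ := Nat.exists_eq_add_of_lt hm
  have hnk : ‖x n‖ ≤ ‖x (n + (n + k) + 1)‖ + ε := hn (n, k) rfl
  simpa only [two_mul, add_assoc] using hnk

end IsCuntzFamily

end BoundedSequences

theorem stmt18_general {A ι : Type*} [CStarAlgebra A] [Fintype ι] [Nontrivial ι] {S : ι → A}
    (hS : IsCuntzFamily S) {Q : ℕ → A} (hQ : ∀ n i, SemiconjBy (S i) (Q n) (Q (n + 1)))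
    {x : ℕ →ᵇ A} (hx : x ∈ finiteSectionsAlgebra
      (NonUnitalStarAlgebra.adjoin ℂ (Set.range S)).topologicalClosure Q) :
    (∃ L, Tendsto (‖x ·‖) atTop (𝓝 L)) ∧
      ∀ φ : ℕ → ℕ, Tendsto φ atTop atTop → Tendsto (fun m => ‖x (φ m)‖) atTop (𝓝 0) →
        Tendsto (‖x ·‖) atTop (𝓝 0) := by
  obtain ⟨i, j, hij⟩ := exists_pair_ne ι
  obtain ⟨L, hL⟩ := hS.exists_tendsto_norm_of_mem_asymptoticSequenceCommutant hij
    (hS.finiteSectionsAlgebra_le_asymptoticSequenceCommutant hij hQ hx)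
  refine ⟨⟨L, hL⟩, fun φ hφ hzero => ?_⟩
  rwa [tendsto_nhds_unique hzero (hL.comp hφ)]

section HilbertBasis

variable {ι 𝕜 E : Type*} [RCLike 𝕜] [NormedAddCommGroup E] [InnerProductSpace 𝕜 E]

theorem ext_on_hilbertBasis {F : Type*} [AddCommMonoid F] [TopologicalSpace F] [T2Space F]
    [Module 𝕜 F] (e : HilbertBasis ι 𝕜 E) {T U : E →L[𝕜] F} (h : ∀ k, T (e k) = U (e k)) : T = U :=
  ContinuousLinearMap.ext_on (Submodule.dense_iff_topologicalClosure_eq_top.mpr e.dense_span)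
    (Set.forall_mem_range.mpr h)

theorem ext_inner_hilbertBasis (e : HilbertBasis ι 𝕜 E) {x y : E}
    (h : ∀ k, inner 𝕜 (e k) x = inner 𝕜 (e k) y) : x = y :=
  e.repr.injective <| lp.ext <| funext fun k => by
    rw [e.repr_apply_apply, e.repr_apply_apply, h]

variable [CompleteSpace E] (e : HilbertBasis ι 𝕜 E) {f g : ι → ι} {T U : E →L[𝕜] E}

theorem star_mul_self_eq_one_of_apply_hilbertBasis (hf : f.Injective)
    (hT : ∀ k, T (e k) = e (f k)) : star T * T = 1 := by
  refine ext_on_hilbertBasis e fun k => ext_inner_hilbertBasis e fun l => ?_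
  classical
  rw [mul_apply_eq_comp, ContinuousLinearMap.star_eq_adjoint,
    ContinuousLinearMap.adjoint_inner_right, hT, hT, one_apply_eq_self,
    orthonormal_iff_ite.mp e.orthonormal, orthonormal_iff_ite.mp e.orthonormal]
  simp only [hf.eq_iff]

theorem star_mul_eq_zero_of_apply_hilbertBasis (hfg : ∀ k l, f k ≠ g l)
    (hT : ∀ k, T (e k) = e (f k)) (hU : ∀ k, U (e k) = e (g k)) : star T * U = 0 := by
  refine ext_on_hilbertBasis e fun k => ext_inner_hilbertBasis e fun l => ?_
  rw [mul_apply_eq_comp, ContinuousLinearMap.star_eq_adjoint,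
    ContinuousLinearMap.adjoint_inner_right, hT, hU, e.orthonormal.2 (hfg l k),
    zero_apply, inner_zero_right]

end HilbertBasis

section Shifts

variable {H : Type*} [NormedAddCommGroup H] [InnerProductSpace ℂ H] (e : HilbertBasis ℕ ℂ H)
  {N : ℕ} {S : Fin N → H →L[ℂ] H}

theorem isCuntzFamily_of_apply_hilbertBasis [CompleteSpace H] (hN : 0 < N)
    (hS : ∀ (i : Fin N) (r : ℕ), S i (e r) = e (r * N + (i : ℕ))) : IsCuntzFamily S := by
  have hisometry (i : Fin N) : star (S i) * S i = 1 :=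
    star_mul_self_eq_one_of_apply_hilbertBasis e
      (fun _ _ h => Nat.eq_of_mul_eq_mul_right hN (Nat.add_right_cancel h)) (hS i)
  have horthogonal {i j : Fin N} (hij : i ≠ j) : star (S i) * S j = 0 := by
    refine star_mul_eq_zero_of_apply_hilbertBasis e (fun r s h => hij (Fin.ext ?_)) (hS i) (hS j)
    simpa only [Nat.mul_add_mod_of_lt i.2, Nat.mul_add_mod_of_lt j.2] using congrArg (· % N) h
  refine ⟨hisometry, horthogonal, ext_on_hilbertBasis e fun k => ?_⟩
  have habsorb (j : Fin N) : (∑ i, S i * star (S i)) * S j = S j := by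
    rw [Finset.sum_mul, Finset.sum_eq_single_of_mem j (Finset.mem_univ j) fun i _ hij => by
      rw [mul_assoc, horthogonal hij, mul_zero], mul_assoc, hisometry, mul_one]
  have hdigit : e k = S ⟨k % N, k.mod_lt hN⟩ (e (k / N)) := by
    rw [hS, Nat.div_add_mod']
  rw [hdigit]
  exact DFunLike.congr_fun (habsorb _) _

theorem semiconjBy_of_apply_hilbertBasis
    (hS : ∀ (i : Fin N) (r : ℕ), S i (e r) = e (r * N + (i : ℕ))) {P : ℕ → H →L[ℂ] H}
    (hP : ∀ n k : ℕ, P n (e k) = if k < n then e k else 0) (m : ℕ) (i : Fin N) :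
    SemiconjBy (S i) (P m) (P (m * N)) := by
  refine ext_on_hilbertBasis e fun k => ?_
  have hlt : k * N + i < m * N ↔ k < m := by
    rw [← Nat.div_lt_iff_lt_mul i.pos, Nat.add_comm, Nat.add_mul_div_right _ _ i.pos,
      Nat.div_eq_of_lt i.2, zero_add]
  rw [mul_apply_eq_comp, mul_apply_eq_comp, hP, hS, hP, apply_ite (S i), hS, map_zero]
  simp only [hlt]

end Shifts

/-- The algebra `S_η(O_N)` is fractal; concretely, for every sequence
`x ∈ S_η(O_N)` the limit `lim_n ‖x n‖` exists, and in particular if `‖x (φ m)‖ → 0` along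
some strictly monotone subsequence `φ`, then `‖x n‖ → 0`. -/
theorem stmt18 {H : Type*} [NormedAddCommGroup H] [InnerProductSpace ℂ H] [CompleteSpace H]
    (e : HilbertBasis ℕ ℂ H) (N : ℕ) (hN : 2 ≤ N)
    (S : Fin N → H →L[ℂ] H)
    (hS : ∀ (i : Fin N) (r : ℕ), S i (e r) = e (r * N + (i : ℕ)))
    (P : ℕ → H →L[ℂ] H)
    (hP : ∀ n k : ℕ, P n (e k) = if k < n then e k else 0)
    (x : ↥(Seta S P)) :
    (∃ L : ℝ, Filter.Tendsto
        (fun n => ‖(x : BoundedContinuousFunction ℕ (H →L[ℂ] H)) n‖)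
        Filter.atTop (nhds L)) ∧
    (∀ φ : ℕ → ℕ, StrictMono φ →
      Filter.Tendsto
        (fun m => ‖(x : BoundedContinuousFunction ℕ (H →L[ℂ] H)) (φ m)‖)
        Filter.atTop (nhds 0) →
      Filter.Tendsto
        (fun n => ‖(x : BoundedContinuousFunction ℕ (H →L[ℂ] H)) n‖)
        Filter.atTop (nhds 0)) := by
  have : Nontrivial (Fin N) := Fin.nontrivial_iff_two_le.mpr hN
  have hmain := stmt18_general (isCuntzFamily_of_apply_hilbertBasis e (by omega) hS)
    (fun n => pow_succ N n ▸ semiconjBy_of_apply_hilbertBasis e hS hP (N ^ n)) x.2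
  exact ⟨hmain.1, fun φ hφ => hmain.2 φ hφ.tendsto_atTop⟩
end
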